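/- Fix positive integers m, d and a similarity class type τ (a multiset of pairs (d_i, λ_i) where d_i is a positive integer and λ_i an integer partition) of size md. Then there exists a polynomial P with rational coefficients such that for every prime power q for which there exists a linear operator of similarity class type τ on an md-dimensional F_q-vector space, and for every such operator T, one has σ(m,d;T) = P(q). -/

import Mathlib

/-- `W` is an `m`-dimensional `T`-splitting subspace: `V = W ⊕ TW ⊕ ⋯ ⊕ T^{d-1}W`. -/
def IsSplittingSubspace {F V : Type*} [Field F] [AddCommGroup V] [Module F V]
    (T : V →ₗ[F] V) (m d : ℕ) (W : Submodule F V) : Prop :=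
  Module.finrank F W = m ∧
  iSupIndep (fun i : Fin d => W.map (T ^ (i : ℕ))) ∧
  (⨆ i : Fin d, W.map (T ^ (i : ℕ))) = ⊤

/-- `σ(m,d;T)`, the number of `m`-dimensional `T`-splitting subspaces. -/
noncomputable def splitCount {F V : Type*} [Field F] [AddCommGroup V] [Module F V]
    (T : V →ₗ[F] V) (m d : ℕ) : ℕ :=
  Set.ncard {W : Submodule F V | IsSplittingSubspace T m d W}

/-- `T` has similarity class type `τ`, where `τ` is a multiset of pairs
`(dᵢ, λᵢ)` with `dᵢ` the degree of a monic irreducible polynomial and `λᵢ` an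
integer partition (a multiset of positive parts).  This holds when there is a
finite set `s` of distinct monic irreducible polynomials and partitions `lam p`
for `p ∈ s` such that `τ` is the multiset of pairs `(deg p, lam p)`, every monic
irreducible polynomial outside `s` acts invertibly on `V` (no primary component),
and for `p ∈ s` the `p`-primary elementary divisors of `T` are given by `lam p`;
the latter is recorded by the (characterizing) kernel dimensions
`dim ker p(T)^j = deg p · Σ_{a ∈ lam p} min a j`. -/
def HasType {F V : Type*} [Field F] [AddCommGroup V] [Module F V]
    (τ : Multiset (ℕ × Multiset ℕ)) (T : V →ₗ[F] V) : Prop :=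
  ∃ (s : Finset (Polynomial F)) (lam : Polynomial F → Multiset ℕ),
    (∀ p ∈ s, p.Monic ∧ Irreducible p) ∧
    (∀ p ∈ s, ∀ a ∈ lam p, 0 < a) ∧
    τ = s.val.map (fun p => (p.natDegree, lam p)) ∧
    (∀ p ∈ s, ∀ j : ℕ,
      Module.finrank F ↥(LinearMap.ker (Polynomial.aeval T (p ^ j))) =
        p.natDegree * ((lam p).map (fun a => min a j)).sum) ∧
    (∀ p : Polynomial F, p.Monic → Irreducible p → p ∉ s →
      LinearMap.ker (Polynomial.aeval T p) = ⊥)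

/-!
Regard `V` as a finite `F[X]`-module on which `X` acts as `T`. Sending `W` to
`W + TW + ⋯ + T^(d-2) W` identifies the splitting subspaces with the subspaces `U` whose iterated
derived subspaces `U ↦ U ∩ T⁻¹ U` have dimensions `(d-1)m, (d-2)m, …, 0`; the inverse recovers `W`
as the last nonzero iterate. The sequence of these dimensions (the profile) eventually stabilizes at
the dimension of the core of `U`, the largest submodule contained in `U`, and the claim is proved
for the number of subspaces with any given profile and any given isomorphism type of the core.

This number is found by counting in two ways the pairs `Y ≤ U ∩ T⁻¹ U` in which `Y` has the type
prescribed for the derived subspace of `U`. For fixed `Y`, the `U` in question are the subspaces of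
given dimension between `Y + TY` and the ambient subspace, and their number is a Gaussian binomial
coefficient. Among the pairs, those with `Y = U ∩ T⁻¹ U` are the subspaces `U` to be counted; in the
others the derived subspace of `U` is larger, and such `U` are known by induction. The induction
starts from subspaces that are themselves submodules, which are counted by stripping columns off
partitions: over a given value of `p • C` the submodules `C` are again counted by Gaussian binomial
coefficients, now at a power of `q`.
-/

namespace SplittingSubspaces

open Polynomial Module
open scoped Pointwise

section GaussianBinomial

variable {R S : Type*} [CommRing R] [CommRing S]

/-- The Gaussian binomial coefficient of `n` over `k` at an element `q` of a commutative ring,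
defined by the `q`-Pascal rule; at a prime power `q` it counts `k`-dimensional subspaces. -/
def gaussBinom (q : R) : ℕ → ℕ → R
  | _, 0 => 1
  | 0, _ + 1 => 0
  | n + 1, k + 1 => gaussBinom q n k + q ^ (k + 1) * gaussBinom q n (k + 1)

theorem map_gaussBinom (f : R →+* S) (q : R) (n k : ℕ) :
    f (gaussBinom q n k) = gaussBinom (f q) n k := by
  fun_induction gaussBinom q n k with
  | case1 => simp [gaussBinom]
  | case2 => simp [gaussBinom]
  | case3 n k ih₁ ih₂ => simp [gaussBinom, ih₁, ih₂]

theorem prod_pow_succ_sub_pow (q : R) (n l : ℕ) :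
    ∏ i ∈ Finset.range (l + 1), (q ^ (n + 1) - q ^ i) =
      (q ^ (n + 1) - 1) * q ^ l * ∏ i ∈ Finset.range l, (q ^ n - q ^ i) := by
  have factor (i : ℕ) : q ^ (n + 1) - q ^ (i + 1) = q * (q ^ n - q ^ i) := by ring
  rw [Finset.prod_range_succ', Finset.prod_congr rfl fun i _ ↦ factor i, Finset.prod_mul_distrib]
  simp only [Finset.prod_const, Finset.card_range, pow_zero]
  ring

theorem gaussBinom_mul_prod (q : R) (n l : ℕ) :
    gaussBinom q n l * ∏ i ∈ Finset.range l, (q ^ l - q ^ i) =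
      ∏ i ∈ Finset.range l, (q ^ n - q ^ i) := by
  fun_induction gaussBinom q n l with
  | case1 => simp
  | case2 l => simp [Finset.prod_range_succ']
  | case3 n l ih₁ ih₂ =>
    rw [Finset.prod_range_succ (fun i ↦ q ^ n - q ^ i)] at ih₂
    rw [prod_pow_succ_sub_pow] at ih₂ ⊢
    rw [prod_pow_succ_sub_pow]
    linear_combination (q ^ (l + 1) - 1) * q ^ l * ih₁ + q ^ (l + 1) * ih₂

end GaussianBinomial

section SubspacesOfAVectorSpace

variable {F V : Type*} [Field F] [AddCommGroup V] [Module F V] [Module.Finite F V]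

theorem natCard_linearIndependent_mkQ (K : Submodule F V) (l : ℕ) :
    Nat.card {s : Fin l → V // LinearIndependent F (K.mkQ ∘ s)} =
      Nat.card {s : Fin l → V ⧸ K // LinearIndependent F s} * Nat.card F ^ (finrank F K * l) := by
  let e : (Fin l → V) ≃ (Fin l → V ⧸ K) × (Fin l → K) :=
    (Equiv.piCongrRight fun _ ↦ K.toAddSubgroup.addGroupEquivQuotientProdAddSubgroup).trans
      (Equiv.arrowProdEquivProdArrow _ _ _)
  have he (s : Fin l → V) : (e s).1 = K.mkQ ∘ s := rfl
  rw [Nat.card_congr ((e.subtypeEquiv fun s ↦ by rw [← he s]).trans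
    (Equiv.prodSubtypeFstEquivSubtypeProd (p := fun s ↦ LinearIndependent F s))), Nat.card_prod,
    Nat.card_fun, Nat.card_fin, Module.natCard_eq_pow_finrank (K := F) (V := K), pow_mul]

theorem span_range_subtype_comp {Y : Submodule F V} {l : ℕ} (hY : finrank F Y = l)
    {s : Fin l → Y} (hs : LinearIndependent F s) :
    Submodule.span F (Set.range (Y.subtype ∘ s)) = Y := by
  rw [Set.range_comp, ← Submodule.map_span, hs.span_eq_top_of_card_eq_finrank' (by simp [hY]),
    Submodule.map_subtype_top]

variable [Finite F]

theorem natCard_linearIndependent (l : ℕ) :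
    (Nat.card {s : Fin l → V // LinearIndependent F s} : ℤ) =
      ∏ i ∈ Finset.range l, ((Nat.card F : ℤ) ^ finrank F V - (Nat.card F : ℤ) ^ i) := by
  have := Fintype.ofFinite F
  have := Module.finite_of_finite F (M := V)
  have := Fintype.ofFinite V
  rcases le_or_gt l (finrank F V) with hl | hl
  · rw [card_linearIndependent hl, Nat.cast_prod, ← Fin.prod_univ_eq_prod_range]
    refine Finset.prod_congr rfl fun i _ ↦ ?_
    rw [Nat.card_eq_fintype_card, Nat.cast_sub (Nat.pow_le_pow_right Fintype.card_pos (by omega))]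
    push_cast
    rfl
  · have : IsEmpty {s : Fin l → V // LinearIndependent F s} :=
      ⟨fun s ↦ by simpa using s.2.fintype_card_le_finrank.trans_lt hl⟩
    rw [Finset.prod_eq_zero (Finset.mem_range.2 hl) (sub_self _), Nat.card_of_isEmpty,
      Nat.cast_zero]

/-- Each such tuple is a basis of its span, so these tuples are counted by their spans. -/
theorem natCard_linearIndependent_mkQ_eq_ncard_mul (K : Submodule F V) (l : ℕ) :
    (Nat.card {s : Fin l → V // LinearIndependent F (K.mkQ ∘ s)} : ℤ) =
      {Y : Submodule F V | finrank F Y = l ∧ Disjoint Y K}.ncard *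
        ∏ i ∈ Finset.range l, ((Nat.card F : ℤ) ^ l - (Nat.card F : ℤ) ^ i) := by
  have := Module.finite_of_finite F (M := V)
  let Ys := {Y : Submodule F V | finrank F Y = l ∧ Disjoint Y K}
  have injOn {Y : Submodule F V} (hY : Disjoint Y K) {s : Fin l → Y}
      (hs : LinearIndependent F s) : LinearIndependent F (K.mkQ ∘ Y.subtype ∘ s) := by
    refine (hs.map' Y.subtype Y.ker_subtype).map (f := K.mkQ) ?_
    rw [K.ker_mkQ]
    refine hY.mono_left (Submodule.span_le.2 ?_)
    rintro _ ⟨i, rfl⟩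
    exact (s i).2
  let φ (x : Σ Y : Ys, {s : Fin l → Y.1 // LinearIndependent F s}) :
      {s : Fin l → V // LinearIndependent F (K.mkQ ∘ s)} :=
    ⟨x.1.1.subtype ∘ x.2.1, injOn x.1.2.2 x.2.2⟩
  have hφ : Function.Bijective φ := by
    constructor
    · rintro ⟨⟨Y, hY⟩, s, hs⟩ ⟨⟨Y', hY'⟩, s', hs'⟩ h
      have h : Y.subtype ∘ s = Y'.subtype ∘ s' := congrArg Subtype.val h
      obtain rfl : Y = Y' := by
        rw [← span_range_subtype_comp hY.1 hs, h, span_range_subtype_comp hY'.1 hs']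
      obtain rfl := Y.injective_subtype.comp_left h
      rfl
    · rintro ⟨s, hs⟩
      have hs' := hs.of_comp
      refine ⟨⟨⟨Submodule.span F (Set.range s), by simpa using finrank_span_eq_card hs', ?_⟩,
        _, linearIndependent_span hs'⟩, rfl⟩
      simpa using Submodule.range_ker_disjoint hs
  have := Fintype.ofFinite Ys
  rw [← Nat.card_eq_of_bijective φ hφ, Nat.card_sigma, Nat.cast_sum,
    Finset.sum_congr rfl fun Y _ ↦ by rw [natCard_linearIndependent, Y.2.1]]
  simp [Ys, Set.ncard]

theorem ncard_disjoint (K : Submodule F V) (l : ℕ) :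
    ({Y : Submodule F V | finrank F Y = l ∧ Disjoint Y K}.ncard : ℤ) =
      (Nat.card F : ℤ) ^ (finrank F K * l) * gaussBinom (Nat.card F : ℤ) (finrank F (V ⧸ K)) l := by
  have tuples_ne_zero :
      ∏ i ∈ Finset.range l, ((Nat.card F : ℤ) ^ l - (Nat.card F : ℤ) ^ i) ≠ 0 := by
    refine Finset.prod_ne_zero_iff.2 fun i hi ↦ sub_ne_zero.2 fun h ↦ ?_
    exact (Finset.mem_range.1 hi).ne' (Nat.pow_right_injective Finite.one_lt_card (mod_cast h))
  refine mul_right_cancel₀ tuples_ne_zero ?_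
  rw [← natCard_linearIndependent_mkQ_eq_ncard_mul, natCard_linearIndependent_mkQ, mul_assoc,
    gaussBinom_mul_prod, ← natCard_linearIndependent]
  push_cast
  ring

theorem ncard_sup_eq_top (K : Submodule F V) (r : ℕ) :
    ({Y : Submodule F V | finrank F Y + r = finrank F V ∧ Y ⊔ K = ⊤}.ncard : ℤ) =
      (Nat.card F : ℤ) ^ (finrank F (V ⧸ K) * r) * gaussBinom (Nat.card F : ℤ) (finrank F K) r := by
  have finrank_dualAnnihilator (Y : Submodule F V) :
      finrank F Y + finrank F Y.dualAnnihilator = finrank F V :=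
    Subspace.finrank_add_finrank_dualAnnihilator_eq Y
  have sup_eq_top (Y : Submodule F V) :
      Y ⊔ K = ⊤ ↔ Disjoint Y.dualAnnihilator K.dualAnnihilator := by
    rw [disjoint_iff, ← Submodule.dualAnnihilator_sup_eq, ← Submodule.dualAnnihilator_top,
      Subspace.dualAnnihilator_inj]
  have dual : {Y : Submodule F V | finrank F Y + r = finrank F V ∧ Y ⊔ K = ⊤}.ncard =
      {Z : Submodule F (Dual F V) | finrank F Z = r ∧ Disjoint Z K.dualAnnihilator}.ncard := by
    refine Set.ncard_congr (fun Y _ ↦ Y.dualAnnihilator) ?_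
      (fun Y Y' _ _ h ↦ Subspace.dualAnnihilator_inj.1 h) ?_
    · rintro Y ⟨hr, hK⟩
      exact ⟨by have := finrank_dualAnnihilator Y; omega, (sup_eq_top Y).1 hK⟩
    · rintro Z ⟨rfl, hK⟩
      obtain ⟨Y, rfl⟩ : ∃ Y : Submodule F V, Y.dualAnnihilator = Z :=
        ⟨_, Subspace.dualCoannihilator_dualAnnihilator_eq⟩
      exact ⟨Y, ⟨finrank_dualAnnihilator Y, (sup_eq_top Y).2 hK⟩, rfl⟩
  rw [dual, ncard_disjoint]
  have := finrank_dualAnnihilator K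
  have := K.finrank_quotient_add_finrank
  have := K.dualAnnihilator.finrank_quotient_add_finrank
  have := Subspace.dual_finrank_eq (K := F) (V := V)
  congr 3 <;> omega

end SubspacesOfAVectorSpace

section Subquotients

variable {R V : Type*} [Ring R] [AddCommGroup V] [Module R V]

/-- The image of `C` in the subquotient `Q / A`; this is meant for `A ≤ C ≤ Q`, where it is the
correspondence of the lattice isomorphism theorem. -/
def toSubquotient (A Q C : Submodule R V) : Submodule R (Q ⧸ A.submoduleOf Q) :=
  (C.submoduleOf Q).map (A.submoduleOf Q).mkQ

theorem toSubquotient_self (A Q : Submodule R V) : toSubquotient A Q Q = ⊤ := by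
  simp [toSubquotient, Submodule.submoduleOf_self]

theorem toSubquotient_sup {A Q C D : Submodule R V} (hC : C ≤ Q) (hD : D ≤ Q) :
    toSubquotient A Q (C ⊔ D) = toSubquotient A Q C ⊔ toSubquotient A Q D := by
  simp only [toSubquotient, Submodule.submoduleOf_sup_of_le hC hD, Submodule.map_sup]

theorem toSubquotient_bijOn {A Q : Submodule R V} (hAQ : A ≤ Q) :
    Set.BijOn (toSubquotient A Q) (Set.Icc A Q) Set.univ := by
  refine ⟨Set.mapsTo_univ _ _, fun C hC D hD h ↦ ?_, fun Y _ ↦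
    ⟨(Y.comap (A.submoduleOf Q).mkQ).map Q.subtype, ⟨?_, Submodule.map_subtype_le _ _⟩, ?_⟩⟩
  · have comap_toSubquotient {C : Submodule R V} (hC : A ≤ C) :
        (toSubquotient A Q C).comap (A.submoduleOf Q).mkQ = C.submoduleOf Q := by
      rw [toSubquotient, Submodule.comap_map_mkQ, sup_eq_right]
      exact Submodule.comap_mono hC
    have hCD : C.submoduleOf Q = D.submoduleOf Q := by
      rw [← comap_toSubquotient hC.1, h, comap_toSubquotient hD.1]
    simpa [Submodule.submoduleOf, Submodule.map_comap_subtype, hC.2, hD.2] using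
      congrArg (Submodule.map Q.subtype) hCD
  · refine fun x hx ↦ ⟨⟨x, hAQ hx⟩, ?_, rfl⟩
    exact Submodule.le_comap_mkQ _ _ (show (⟨x, hAQ hx⟩ : Q) ∈ A.submoduleOf Q from hx)
  · rw [toSubquotient, Submodule.submoduleOf.eq_1 (Submodule.map _ _),
      Submodule.comap_map_eq_of_injective Q.subtype_injective,
      Submodule.map_comap_eq_of_surjective (Submodule.mkQ_surjective _)]

variable {F W : Type*} [Field F] [Module F V] [SMul F R] [IsScalarTower F R V]
  [AddCommGroup W] [Module R W] [Module F W] [IsScalarTower F R W]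

theorem finrank_map_add_finrank_inf_ker [Module.Finite F V] (f : V →ₗ[R] W) (C : Submodule R V) :
    finrank F (C.map f) + finrank F (C ⊓ LinearMap.ker f : Submodule R V) = finrank F C := by
  let g : C →ₗ[R] W := f ∘ₗ C.subtype
  have range_g : LinearMap.range g = C.map f := by
    rw [LinearMap.range_comp, Submodule.range_subtype]
  have ker_g : LinearMap.ker g = (C ⊓ LinearMap.ker f).submoduleOf C := by
    rw [LinearMap.ker_comp, Submodule.submoduleOf, Submodule.comap_inf,
      Submodule.comap_subtype_self, top_inf_eq]
  have : Module.Finite F C := inferInstanceAs (Module.Finite F (C.restrictScalars F))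
  rw [← range_g, ← ((Submodule.submoduleOfEquivOfLe inf_le_left).restrictScalars F).finrank_eq,
    ← ker_g]
  exact (g.restrictScalars F).finrank_range_add_finrank_ker

theorem finrank_toSubquotient_add_finrank [Finite V] {A Q C : Submodule R V}
    (hA : A ≤ C) (hC : C ≤ Q) :
    finrank F (toSubquotient A Q C) + finrank F A = finrank F C := by
  have finrank_submoduleOf {D : Submodule R V} (hD : D ≤ Q) :
      finrank F (D.submoduleOf Q) = finrank F D :=
    ((Submodule.submoduleOfEquivOfLe hD).restrictScalars F).finrank_eq
  have hAC : A.submoduleOf Q ≤ C.submoduleOf Q := Submodule.comap_mono hA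
  have h := finrank_map_add_finrank_inf_ker (F := F) (A.submoduleOf Q).mkQ (C.submoduleOf Q)
  rwa [Submodule.ker_mkQ, inf_eq_right.2 hAC, finrank_submoduleOf hC,
    finrank_submoduleOf (hA.trans hC)] at h

theorem finrank_subquotient_add_finrank [Finite V] {A Q : Submodule R V} (hAQ : A ≤ Q) :
    finrank F (Q ⧸ A.submoduleOf Q) + finrank F A = finrank F Q := by
  rw [← finrank_toSubquotient_add_finrank hAQ le_rfl, toSubquotient_self]
  exact congrArg (· + _) (finrank_top F _).symm

theorem ncard_Icc_sup_eq [Finite V] {A K Q : Submodule R V} (hA : A ≤ K) (hK : K ≤ Q)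
    (r : ℕ) :
    {C : Submodule R V | A ≤ C ∧ C ⊔ K = Q ∧ finrank F C + r = finrank F Q}.ncard =
      {Y : Submodule R (Q ⧸ A.submoduleOf Q) |
        finrank F Y + r = finrank F (Q ⧸ A.submoduleOf Q) ∧ Y ⊔ toSubquotient A Q K = ⊤}.ncard := by
  have bij := toSubquotient_bijOn (hA.trans hK)
  have finrank_Q := finrank_subquotient_add_finrank (F := F) (hA.trans hK)
  have iff {C : Submodule R V} (hAC : A ≤ C) (hC : C ≤ Q) :
      (finrank F (toSubquotient A Q C) + r = finrank F (Q ⧸ A.submoduleOf Q) ∧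
          toSubquotient A Q C ⊔ toSubquotient A Q K = ⊤) ↔
        C ⊔ K = Q ∧ finrank F C + r = finrank F Q := by
    have := finrank_toSubquotient_add_finrank (F := F) hAC hC
    rw [← toSubquotient_sup hC hK, ← toSubquotient_self A Q,
      bij.injOn.eq_iff ⟨hAC.trans le_sup_left, sup_le hC hK⟩ ⟨hA.trans hK, le_rfl⟩, and_comm]
    exact and_congr_right' (by omega)
  refine Set.ncard_congr (fun C _ ↦ toSubquotient A Q C) ?_ ?_ ?_
  · rintro C ⟨hAC, hCK, hr⟩
    exact (iff hAC (hCK ▸ le_sup_left)).2 ⟨hCK, hr⟩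
  · rintro C D ⟨hAC, hCK, -⟩ ⟨hAD, hDK, -⟩ h
    exact bij.injOn ⟨hAC, hCK ▸ le_sup_left⟩ ⟨hAD, hDK ▸ le_sup_left⟩ h
  · intro Y hY
    obtain ⟨C, ⟨hAC, hC⟩, rfl⟩ := bij.surjOn (Set.mem_univ Y)
    exact ⟨C, ⟨hAC, (iff hAC hC).1 hY⟩, rfl⟩

theorem ncard_Icc_finrank_add_eq {F V : Type*} [Field F] [Finite F] [AddCommGroup V] [Module F V]
    [Finite V] {A U : Submodule F V} (h : A ≤ U) (r : ℕ) :
    ({W | W ∈ Set.Icc A U ∧ finrank F W + r = finrank F U}.ncard : ℤ) =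
      gaussBinom (Nat.card F : ℤ) (finrank F U - finrank F A) r := by
  have Icc : {W | W ∈ Set.Icc A U ∧ finrank F W + r = finrank F U} =
      {W | A ≤ W ∧ W ⊔ U = U ∧ finrank F W + r = finrank F U} := by
    simp only [Set.mem_Icc, sup_eq_right, and_assoc]
  rw [Icc, ncard_Icc_sup_eq h le_rfl, ncard_sup_eq_top, toSubquotient_self, finrank_top,
    eq_tsub_of_add_eq (finrank_subquotient_add_finrank (F := F) h),
    Module.finrank_zero_of_subsingleton, zero_mul, pow_zero, one_mul]

end Subquotients

section SemisimpleSubquotients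

/-- The polynomial counting, at `q = #F`, the submodules of `F`-codimension `r` that
together with `K` span a module `E` which is a vector space over an extension of `F` of degree `e`,
where `t = dim (E / K)` and `k = dim K` are dimensions over `F`. -/
noncomputable def supTopPoly (e t k r : ℕ) : ℤ[X] :=
  if e ∣ r then (X ^ e) ^ (t / e * (r / e)) * gaussBinom (X ^ e) (k / e) (r / e) else 0

variable {F R V : Type*} [Field F] [Finite F] [AddCommGroup V] [Module F V] [Finite V]

theorem ncard_sup_eq_top_tower {κ : Type*} [Field κ] [Algebra F κ] [Module.Finite F κ]
    [Module κ V] [IsScalarTower F κ V] (K : Submodule κ V) (r : ℕ) :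
    ({Y : Submodule κ V | finrank F Y + r = finrank F V ∧ Y ⊔ K = ⊤}.ncard : ℤ) =
      (supTopPoly (finrank F κ) (finrank F (V ⧸ K)) (finrank F K) r).eval (Nat.card F : ℤ) := by
  set e := finrank F κ
  have : Finite κ := Module.finite_of_finite F
  have he : 0 < e := finrank_pos
  have finrank_submodule (Y : Submodule κ V) : finrank F Y = e * finrank κ Y :=
    (finrank_mul_finrank F κ Y).symm
  have finrank_V : finrank F V = e * finrank κ V := (finrank_mul_finrank F κ V).symm
  have finrank_quotient : finrank F (V ⧸ K) = e * finrank κ (V ⧸ K) :=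
    (finrank_mul_finrank F κ (V ⧸ K)).symm
  simp only [supTopPoly, finrank_submodule, finrank_V, finrank_quotient]
  split_ifs with h
  · obtain ⟨r, rfl⟩ := h
    simp only [← mul_add, Nat.mul_right_inj he.ne', Nat.mul_div_cancel_left _ he]
    rw [ncard_sup_eq_top, Module.natCard_eq_pow_finrank (K := F) (V := κ), ← coe_evalRingHom,
      map_mul, map_gaussBinom]
    simp [e]
  · have empty : {Y : Submodule κ V | e * finrank κ Y + r = e * finrank κ V ∧ Y ⊔ K = ⊤} = ∅ :=
      Set.eq_empty_of_forall_notMem fun Y hY ↦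
        h ((Nat.dvd_add_right (Dvd.intro _ rfl)).1 (Dvd.intro _ hY.1.symm))
    rw [empty, Set.ncard_empty, eval_zero, Nat.cast_zero]

variable [CommRing R] [Algebra F R] [Module R V] [IsScalarTower F R V]

theorem ncard_sup_eq_top_of_isTorsionBySet (I : Ideal R) [I.IsMaximal] [Module.Finite F (R ⧸ I)]
    (hI : Module.IsTorsionBySet R V I) (K : Submodule R V) (r : ℕ) :
    ({Y : Submodule R V | finrank F Y + r = finrank F V ∧ Y ⊔ K = ⊤}.ncard : ℤ) =
      (supTopPoly (finrank F (R ⧸ I)) (finrank F (V ⧸ K)) (finrank F K) r).eval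
        (Nat.card F : ℤ) := by
  let := Ideal.Quotient.field I
  let := hI.module
  have : IsScalarTower R (R ⧸ I) V := hI.isScalarTower
  have : IsScalarTower F (R ⧸ I) V := hI.isScalarTower
  let δ : Submodule (R ⧸ I) V ≃o Submodule R V :=
    Submodule.orderIsoOfAlgebraMapSurjective Ideal.Quotient.mk_surjective
  refine Eq.trans ?_ (ncard_sup_eq_top_tower (δ.symm K) r)
  congr 1
  refine Set.ncard_congr (fun Y _ ↦ δ.symm Y) ?_ (fun Y Y' _ _ h ↦ δ.symm.injective h) ?_
  · rintro Y ⟨hr, hK⟩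
    exact ⟨hr, by rw [← δ.symm.map_sup, hK, δ.symm.map_top]⟩
  · rintro Y ⟨hr, hK⟩
    refine ⟨δ Y, ⟨hr, ?_⟩, by simp⟩
    rw [← δ.apply_symm_apply K, ← δ.map_sup, hK, δ.map_top]

theorem ncard_Icc_sup_eq_supTopPoly (I : Ideal R) [I.IsMaximal] [Module.Finite F (R ⧸ I)]
    {A K Q : Submodule R V} (hA : A ≤ K) (hK : K ≤ Q) (hI : ∀ a ∈ I, ∀ x ∈ Q, a • x ∈ A) (r : ℕ) :
    ({C : Submodule R V | A ≤ C ∧ C ⊔ K = Q ∧ finrank F C + r = finrank F Q}.ncard : ℤ) =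
      (supTopPoly (finrank F (R ⧸ I)) (finrank F Q - finrank F K) (finrank F K - finrank F A)
        r).eval (Nat.card F : ℤ) := by
  have torsion : Module.IsTorsionBySet R (Q ⧸ A.submoduleOf Q) I := by
    rintro x ⟨a, ha⟩
    obtain ⟨x, rfl⟩ := Submodule.mkQ_surjective _ x
    rw [← map_smul]
    exact (Submodule.Quotient.mk_eq_zero _).2 (hI a ha x x.2)
  have : Finite (Q ⧸ A.submoduleOf Q) := Finite.of_surjective _ (Submodule.mkQ_surjective _)
  rw [ncard_Icc_sup_eq hA hK, ncard_sup_eq_top_of_isTorsionBySet I torsion]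
  have := finrank_toSubquotient_add_finrank (F := F) hA hK
  have := finrank_subquotient_add_finrank (F := F) (hA.trans hK)
  have : finrank F ((Q ⧸ A.submoduleOf Q) ⧸ toSubquotient A Q K) +
      finrank F (toSubquotient A Q K) = finrank F (Q ⧸ A.submoduleOf Q) :=
    ((toSubquotient A Q K).restrictScalars F).finrank_quotient_add_finrank
  congr 2 <;> omega

end SemisimpleSubquotients

section Fibres

variable {α β : Type*} [Finite α] {s : Set α} {f : α → β}

theorem ncard_eq_sum_ncard {t : Finset β} (hf : Set.MapsTo f s t) :
    s.ncard = ∑ b ∈ t, {a ∈ s | f a = b}.ncard := by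
  classical
  have := Fintype.ofFinite α
  have hf' : (s.toFinset : Set α).MapsTo f t := by rwa [Set.coe_toFinset]
  rw [Set.ncard_eq_toFinset_card', Finset.card_eq_sum_card_fiberwise hf']
  refine Finset.sum_congr rfl fun b _ ↦ ?_
  rw [Set.ncard_eq_toFinset_card']
  congr 1
  ext a
  simp

theorem ncard_eq_ncard_mul [Finite β] {t : Set β} (hf : Set.MapsTo f s t) {n : ℤ}
    (hn : ∀ b ∈ t, ({a ∈ s | f a = b}.ncard : ℤ) = n) : (s.ncard : ℤ) = t.ncard * n := by
  lift t to Finset β using t.toFinite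
  rw [ncard_eq_sum_ncard hf, Nat.cast_sum, Set.ncard_coe_finset, ← nsmul_eq_mul]
  exact Finset.sum_eq_card_nsmul hn

end Fibres

section SMul

variable {R V : Type*} [CommRing R] [AddCommGroup V] [Module R V]

theorem smul_inf_torsionBy_of_isCoprime {f g : R} (h : IsCoprime f g) (C : Submodule R V) :
    f • C ⊓ Submodule.torsionBy R V g = C ⊓ Submodule.torsionBy R V g := by
  refine le_antisymm (inf_le_inf_right _ (Submodule.smul_le_self_of_tower f C))
    fun x ⟨hxC, hxg⟩ ↦ ⟨?_, hxg⟩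
  obtain ⟨a, b, hab⟩ := h
  have hx : x = f • a • x :=
    calc x = (a * f + b * g) • x := by rw [hab, one_smul]
      _ = f • a • x + b • g • x := by module
      _ = f • a • x := by rw [(Submodule.mem_torsionBy_iff g x).1 hxg, smul_zero, add_zero]
  rw [hx]
  exact Submodule.smul_mem_pointwise_smul _ _ _ (C.smul_mem a hxC)

theorem smul_inf_comap {f : R} {B D : Submodule R V} (hD : D ≤ f • B) :
    f • (B ⊓ D.comap (DistribSMul.toLinearMap R V f)) = D := by
  refine le_antisymm ?_ fun x hx ↦ ?_
  · rintro _ ⟨x, hx, rfl⟩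
    exact hx.2
  · obtain ⟨y, hy, rfl⟩ := hD hx
    exact ⟨y, ⟨hy, hx⟩, rfl⟩

theorem smul_inf_torsionBy_self (f : R) (C : Submodule R V) :
    f • (C ⊓ Submodule.torsionBy R V f) = ⊥ := by
  rw [eq_bot_iff]
  rintro _ ⟨x, hx, rfl⟩
  exact hx.2

theorem sup_sup_inf_torsionBy_eq_iff {f : R} {B C D : Submodule R V} (hD : D ≤ f • B)
    (hDC : D ≤ C) (hCB : C ≤ B) :
    C ⊔ (D ⊔ B ⊓ Submodule.torsionBy R V f) =
        B ⊓ D.comap (DistribSMul.toLinearMap R V f) ↔ f • C = D := by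
  constructor
  · intro h
    rw [← smul_inf_comap hD, ← h, Submodule.smul_sup', Submodule.smul_sup',
      smul_inf_torsionBy_self, sup_bot_eq, sup_eq_left.2 (smul_mono_right f hDC)]
  · rintro rfl
    refine le_antisymm ?_ fun x ⟨hxB, y, hyC, hyx⟩ ↦ ?_
    · refine sup_le (le_inf hCB fun x hx ↦ Submodule.smul_mem_pointwise_smul _ _ _ hx)
        (sup_le (le_inf (hDC.trans hCB) fun x hx ↦ ?_) (inf_le_inf_left B fun x hx ↦ ?_))
      · exact Submodule.smul_mem_pointwise_smul _ _ _ (hDC hx)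
      · rw [Submodule.mem_comap, LinearMap.mem_ker.1 hx]
        exact zero_mem _
    · rw [← add_sub_cancel y x]
      refine Submodule.add_mem_sup hyC (Submodule.mem_sup_right ⟨sub_mem hxB (hCB hyC), ?_⟩)
      rw [SetLike.mem_coe, Submodule.torsionBy, LinearMap.mem_ker, map_sub, sub_eq_zero, hyx]

end SMul

section SocleType

variable {ι F V : Type*} [Field F] [AddCommGroup V] [Module F V] [Module F[X] V]
  [IsScalarTower F F[X] V]

/-- The submodule `C` of an `F[X]`-module has, for every prime `p i`, a primary part described by a
partition `λ`; its `socleType` records `deg (p i)` times the conjugate partition of `λ`, with parts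
indexed from `0`, as the dimensions of the `p i`-torsion of `p i ^ j • C`. -/
noncomputable def socleType (p : ι → F[X]) (C : Submodule F[X] V) (i : ι) (j : ℕ) : ℕ :=
  finrank F (p i ^ j • C ⊓ Submodule.torsionBy F[X] V (p i) : Submodule F[X] V)

theorem socleType_zero_right (p : ι → F[X]) (C : Submodule F[X] V) (i : ι) :
    socleType p C i 0 = finrank F (C ⊓ Submodule.torsionBy F[X] V (p i) : Submodule F[X] V) := by
  rw [socleType, pow_zero, one_smul]

theorem socleType_bot (p : ι → F[X]) : socleType p (⊥ : Submodule F[X] V) = 0 := by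
  ext i j
  rw [socleType, Submodule.smul_bot', bot_inf_eq]
  exact finrank_bot F V

theorem socleType_smul_self (p : ι → F[X]) (C : Submodule F[X] V) (i : ι) (j : ℕ) :
    socleType p (p i • C) i j = socleType p C i (j + 1) := by
  rw [socleType, smul_smul, ← pow_succ, socleType]

theorem socleType_smul_of_isCoprime {p : ι → F[X]} {f : F[X]} {i : ι} (h : IsCoprime f (p i))
    (C : Submodule F[X] V) : socleType p (f • C) i = socleType p C i := by
  ext j
  rw [socleType, smul_comm, smul_inf_torsionBy_of_isCoprime h, socleType]

theorem socleType_smul [DecidableEq ι] {p : ι → F[X]}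
    (hp : Pairwise fun i j ↦ IsCoprime (p i) (p j)) (C : Submodule F[X] V) (i : ι) :
    socleType p (p i • C) =
      Function.update (socleType p C) i fun j ↦ socleType p C i (j + 1) := by
  refine (Function.update_eq_iff.2 ⟨?_, fun k hk ↦ ?_⟩).symm
  · ext j
    rw [socleType_smul_self]
  · rw [socleType_smul_of_isCoprime (hp hk.symm)]

theorem finrank_smul_add_finrank_inf_torsionBy [Module.Finite F V] (f : F[X])
    (C : Submodule F[X] V) :
    finrank F (f • C : Submodule F[X] V) +
      finrank F (C ⊓ Submodule.torsionBy F[X] V f : Submodule F[X] V) = finrank F C :=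
  finrank_map_add_finrank_inf_ker (DistribSMul.toLinearMap F[X] V f) C

theorem finrank_inf_comap [Module.Finite F V] {f : F[X]} {B D : Submodule F[X] V}
    (hD : D ≤ f • B) :
    finrank F (B ⊓ D.comap (DistribSMul.toLinearMap F[X] V f) : Submodule F[X] V) =
      finrank F D + finrank F (B ⊓ Submodule.torsionBy F[X] V f : Submodule F[X] V) := by
  have torsion_le : B ⊓ Submodule.torsionBy F[X] V f ≤
      D.comap (DistribSMul.toLinearMap F[X] V f) :=
    inf_le_right.trans (LinearMap.ker_le_comap _)
  rw [← finrank_smul_add_finrank_inf_torsionBy f, smul_inf_comap hD, inf_right_comm,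
    inf_eq_left.2 torsion_le]

theorem finrank_sup_inf_torsionBy [Module.Finite F V] (f : F[X]) {B D : Submodule F[X] V}
    (hD : D ≤ B) :
    finrank F (D ⊔ B ⊓ Submodule.torsionBy F[X] V f : Submodule F[X] V) +
        finrank F (D ⊓ Submodule.torsionBy F[X] V f : Submodule F[X] V) =
      finrank F D + finrank F (B ⊓ Submodule.torsionBy F[X] V f : Submodule F[X] V) := by
  rw [← finrank_smul_add_finrank_inf_torsionBy f (D ⊔ _), Submodule.smul_sup',
    smul_inf_torsionBy_self, sup_bot_eq, ← finrank_smul_add_finrank_inf_torsionBy f D,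
    le_antisymm (inf_le_inf_right _ (sup_le hD inf_le_left)) (le_inf le_sup_right inf_le_right)]
  ring

theorem finrank_smul_add_socleType [Module.Finite F V] (p : ι → F[X])
    (C : Submodule F[X] V) (i : ι) :
    finrank F (p i • C : Submodule F[X] V) + socleType p C i 0 = finrank F C := by
  rw [socleType_zero_right, finrank_smul_add_finrank_inf_torsionBy]

theorem socleType_eq_iff [DecidableEq ι] {p : ι → F[X]}
    (hp : Pairwise fun i j ↦ IsCoprime (p i) (p j)) {i : ι} {μ : ι → ℕ → ℕ}
    {C : Submodule F[X] V} : socleType p C = μ ↔ socleType p C i 0 = μ i 0 ∧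
      socleType p (p i • C) = Function.update μ i fun j ↦ μ i (j + 1) := by
  constructor
  · rintro rfl
    exact ⟨rfl, socleType_smul hp C i⟩
  · rintro ⟨h₀, h⟩
    rw [socleType_smul hp] at h
    ext k j
    have hk := congrFun₂ h k
    rcases eq_or_ne k i with rfl | hki
    · cases j with
      | zero => exact h₀
      | succ j => simpa using hk j
    · simpa [hki] using hk j

/-- `p` represents every prime in the support of the `F[X]`-module `V` exactly once, and `e` lists
the degrees of these primes. -/
structure IsPrimaryFamily (V : Type*) [AddCommGroup V] [Module F[X] V] (e : ι → ℕ)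
    (p : ι → F[X]) : Prop where
  irreducible (i : ι) : Irreducible (p i)
  natDegree_eq (i : ι) : (p i).natDegree = e i
  isCoprime : Pairwise fun i j ↦ IsCoprime (p i) (p j)
  exists_inf_torsionBy_ne_bot (C : Submodule F[X] V) :
    C ≠ ⊥ → ∃ i, C ⊓ Submodule.torsionBy F[X] V (p i) ≠ ⊥

variable [Finite V]

theorem IsPrimaryFamily.exists_socleType_pos {e : ι → ℕ} {p : ι → F[X]}
    (hp : IsPrimaryFamily V e p) {C : Submodule F[X] V} (hC : C ≠ ⊥) :
    ∃ i, 0 < socleType p C i 0 := by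
  obtain ⟨i, hi⟩ := hp.exists_inf_torsionBy_ne_bot C hC
  refine ⟨i, ?_⟩
  rw [socleType_zero_right, Module.finrank_pos_iff (R := F)]
  exact Submodule.nontrivial_iff_ne_bot.2 hi

theorem finrank_le_finrank {C D : Submodule F[X] V} (h : C ≤ D) : finrank F C ≤ finrank F D :=
  Submodule.finrank_mono (s := C.restrictScalars F) (t := D.restrictScalars F) h

variable {e : ι → ℕ} {p : ι → F[X]} {i : ι} {c : ℕ} {μ : ι → ℕ → ℕ} {B : Submodule F[X] V}

theorem eq_bot_of_socleType_eq (hp : IsPrimaryFamily V e p) {C : Submodule F[X] V}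
    (hCB : C ≤ B)
    (h : ¬ ∃ i, 0 < socleType p C i 0 ∧ socleType p C i 0 ≤ socleType p B i 0 ∧
      socleType p C i 0 ≤ finrank F C) : C = ⊥ := by
  by_contra hC
  obtain ⟨i, hi⟩ := hp.exists_socleType_pos hC
  refine h ⟨i, hi, ?_, ?_⟩
  · simpa only [socleType_zero_right] using finrank_le_finrank (inf_le_inf_right _ hCB)
  · exact (Nat.le_add_left _ _).trans (finrank_smul_add_socleType p C i).le

theorem setOf_smul_eq [DecidableEq ι] (hp : IsPrimaryFamily V e p)
    {D : Submodule F[X] V} (hD : D ≤ p i • B) (hc : finrank F D + μ i 0 = c)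
    (hμ : socleType p D = Function.update μ i fun j ↦ μ i (j + 1))
    (hi : μ i 0 ≤ socleType p B i 0) :
    {C : Submodule F[X] V | (C ≤ B ∧ finrank F C = c ∧ socleType p C = μ) ∧ p i • C = D} =
      {C | D ≤ C ∧
        C ⊔ (D ⊔ B ⊓ Submodule.torsionBy F[X] V (p i)) =
          B ⊓ D.comap (DistribSMul.toLinearMap F[X] V (p i)) ∧
        finrank F C + (socleType p B i 0 - μ i 0) = finrank F D + socleType p B i 0} := by
  ext C
  constructor
  · rintro ⟨⟨hCB, hCc, -⟩, hC⟩
    have hDC : D ≤ C := hC ▸ Submodule.smul_le_self_of_tower _ _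
    exact ⟨hDC, (sup_sup_inf_torsionBy_eq_iff hD hDC hCB).2 hC, by omega⟩
  · rintro ⟨hDC, hCQ, hC⟩
    have hCB : C ≤ B := le_sup_left.trans (hCQ.le.trans inf_le_left)
    have hpC : p i • C = D := (sup_sup_inf_torsionBy_eq_iff hD hDC hCB).1 hCQ
    have finrank_C := finrank_smul_add_socleType p C i
    rw [hpC] at finrank_C
    exact ⟨⟨hCB, by omega, (socleType_eq_iff hp.isCoprime).2 ⟨by omega, hpC.symm ▸ hμ⟩⟩, hpC⟩

theorem ncard_smul_eq [Finite F] [DecidableEq ι] (hp : IsPrimaryFamily V e p)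
    {D : Submodule F[X] V} (hD : D ≤ p i • B) (hc : finrank F D + μ i 0 = c)
    (hμ : socleType p D = Function.update μ i fun j ↦ μ i (j + 1))
    (hi : μ i 0 ≤ socleType p B i 0) :
    ({C : Submodule F[X] V |
        (C ≤ B ∧ finrank F C = c ∧ socleType p C = μ) ∧ p i • C = D}.ncard : ℤ) =
      (supTopPoly (e i) (μ i 1) (socleType p B i 0 - μ i 1) (socleType p B i 0 - μ i 0)).eval
        (Nat.card F : ℤ) := by
  let K := D ⊔ B ⊓ Submodule.torsionBy F[X] V (p i)
  let Q := B ⊓ D.comap (DistribSMul.toLinearMap F[X] V (p i))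
  have hDB : D ≤ B := hD.trans (Submodule.smul_le_self_of_tower _ _)
  have finrank_Q : finrank F Q = finrank F D + socleType p B i 0 := by
    rw [finrank_inf_comap hD, socleType_zero_right]
  have finrank_K : finrank F K + μ i 1 = finrank F D + socleType p B i 0 := by
    rw [socleType_zero_right, ← finrank_sup_inf_torsionBy (p i) hDB, ← socleType_zero_right p D, hμ,
      Function.update_self]
  have finrank_quotient : finrank F (F[X] ⧸ Ideal.span {p i}) = e i := by
    rw [finrank_quotient_span_eq_natDegree, hp.natDegree_eq]
  have : Module.Finite F (F[X] ⧸ Ideal.span {p i}) := by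
    refine Module.finite_of_finrank_pos ?_
    rw [finrank_quotient_span_eq_natDegree]
    exact (hp.irreducible i).natDegree_pos
  have := PrincipalIdealRing.isMaximal_of_irreducible (hp.irreducible i)
  have hKQ : K ≤ Q :=
    sup_le (le_inf hDB fun x hx ↦ D.smul_mem _ hx) (inf_le_inf_left B (LinearMap.ker_le_comap _))
  have smul_mem : ∀ a ∈ Ideal.span {p i}, ∀ x ∈ Q, a • x ∈ D := by
    rintro a ha x ⟨-, hx⟩
    obtain ⟨b, rfl⟩ := Ideal.mem_span_singleton'.1 ha
    exact mul_smul b (p i) x ▸ D.smul_mem b hx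
  rw [setOf_smul_eq hp hD hc hμ hi, ← finrank_Q,
    ncard_Icc_sup_eq_supTopPoly _ le_sup_left hKQ smul_mem, finrank_quotient]
  congr 2 <;> omega

end SocleType

section CountingSubmodules

universe u v

/-- Induction on `c`: the map `C ↦ p i • C` strips a column of the partition at `p i`, and its
fibres are sets of complements in semisimple subquotients. -/
theorem exists_polynomial_ncard_submodules {ι : Type*} (e : ι → ℕ) (c : ℕ) (μ ν : ι → ℕ → ℕ) :
    ∃ P : ℤ[X], ∀ (F : Type u) [Field F] [Finite F] (V : Type v) [AddCommGroup V] [Module F V]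
      [Module F[X] V] [IsScalarTower F F[X] V] [Finite V] (p : ι → F[X]),
      IsPrimaryFamily V e p → ∀ B : Submodule F[X] V, socleType p B = ν →
        ({C | C ≤ B ∧ finrank F C = c ∧ socleType p C = μ}.ncard : ℤ) =
          P.eval (Nat.card F : ℤ) := by
  classical
  induction c using Nat.strong_induction_on generalizing μ ν with
  | _ c ih
  by_cases h : ∃ i, 0 < μ i 0 ∧ μ i 0 ≤ ν i 0 ∧ μ i 0 ≤ c
  · obtain ⟨i, hi, hν, hc⟩ := h
    obtain ⟨P, hP⟩ := ih (c - μ i 0) (by omega) (Function.update μ i fun j ↦ μ i (j + 1))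
      (Function.update ν i fun j ↦ ν i (j + 1))
    refine ⟨P * supTopPoly (e i) (μ i 1) (ν i 0 - μ i 1) (ν i 0 - μ i 0), ?_⟩
    rintro F _ _ V _ _ _ _ _ p hp B rfl
    rw [eval_mul, ← hP F V p hp (p i • B) (socleType_smul hp.isCoprime B i)]
    refine ncard_eq_ncard_mul (f := (p i • ·)) ?_ ?_
    · rintro C ⟨hCB, rfl, rfl⟩
      have finrank_smul := eq_tsub_of_add_eq (finrank_smul_add_socleType p C i)
      exact ⟨smul_mono_right _ hCB, finrank_smul, socleType_smul hp.isCoprime C i⟩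
    · rintro D ⟨hDB, hDc, hDμ⟩
      exact ncard_smul_eq hp hDB (by omega) hDμ hν
  · refine ⟨if c = 0 ∧ μ = 0 then 1 else 0, ?_⟩
    rintro F _ _ V _ _ _ _ _ p hp B rfl
    have eq_bot {C : Submodule F[X] V} (hC : C ≤ B ∧ finrank F C = c ∧ socleType p C = μ) :
        C = ⊥ := by
      obtain ⟨hCB, rfl, rfl⟩ := hC
      exact eq_bot_of_socleType_eq hp hCB h
    have finrank_bot_eq : finrank F (⊥ : Submodule F[X] V) = 0 := finrank_bot F V
    split_ifs with h₀
    · have : {C | C ≤ B ∧ finrank F C = c ∧ socleType p C = μ} = {⊥} :=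
        Set.eq_singleton_iff_unique_mem.2
          ⟨⟨bot_le, by rw [h₀.1, finrank_bot_eq], by rw [h₀.2, socleType_bot]⟩, fun _ ↦ eq_bot⟩
      simp [this]
    · have : {C | C ≤ B ∧ finrank F C = c ∧ socleType p C = μ} = ∅ := by
        refine Set.eq_empty_of_forall_notMem fun C hC ↦ h₀ ?_
        obtain rfl := eq_bot hC
        exact ⟨hC.2.1.symm.trans finrank_bot_eq, hC.2.2.symm.trans (socleType_bot p)⟩
      simp [this]

end CountingSubmodules

section DerivedSubspaces

variable {F V : Type*} [Field F] [AddCommGroup V] [Module F V] [Module F[X] V]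
  [IsScalarTower F F[X] V]

/-- The derived subspace `U ∩ T⁻¹ U` of a subspace `U`, where `T` is multiplication by `X`. -/
noncomputable def derived (U : Submodule F V) : Submodule F V :=
  U ⊓ U.comap (DistribSMul.toLinearMap F V (X : F[X]))

theorem derived_le (U : Submodule F V) : derived U ≤ U :=
  inf_le_left

/-- The sum `U + T U` of a subspace and its image under multiplication `T` by `X`. -/
noncomputable def expand (U : Submodule F V) : Submodule F V :=
  U ⊔ (X : F[X]) • U

theorem gc_expand_derived : GaloisConnection (expand (F := F) (V := V)) derived := fun U W ↦ by
  rw [derived, le_inf_iff, ← Submodule.map_le_iff_le_comap, expand, sup_le_iff]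
  rfl

theorem derived_restrictScalars (C : Submodule F[X] V) :
    derived (C.restrictScalars F) = C.restrictScalars F :=
  inf_eq_left.2 fun _ hx ↦ C.smul_mem X hx

theorem finrank_derived_add_finrank_expand [Module.Finite F V] (U : Submodule F V) :
    finrank F (derived U) + finrank F (expand U) = 2 * finrank F U := by
  have finrank_map_X :=
    finrank_map_add_finrank_inf_ker (F := F) (U.mkQ ∘ₗ DistribSMul.toLinearMap F V (X : F[X])) U
  have finrank_map_sup :=
    finrank_map_add_finrank_inf_ker (F := F) U.mkQ (U ⊔ (X : F[X]) • U)
  rw [Submodule.map_comp, ← Submodule.pointwise_smul_def, LinearMap.ker_comp,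
    U.ker_mkQ] at finrank_map_X
  rw [U.ker_mkQ, Submodule.map_sup, U.mkQ_map_self, bot_sup_eq,
    inf_eq_right.2 le_sup_left] at finrank_map_sup
  rw [derived, expand]
  omega

/-- The largest `F[X]`-submodule contained in a subspace `U`. -/
def core (U : Submodule F V) : Submodule F[X] V where
  carrier := {x | ∀ f : F[X], f • x ∈ U}
  add_mem' hx hy f := by
    rw [smul_add]
    exact U.add_mem (hx f) (hy f)
  zero_mem' f := by
    rw [smul_zero]
    exact U.zero_mem
  smul_mem' g x hx f := smul_smul f g x ▸ hx (f * g)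

theorem le_core_iff {C : Submodule F[X] V} {U : Submodule F V} :
    C ≤ core U ↔ C.restrictScalars F ≤ U :=
  ⟨fun h x hx ↦ one_smul F[X] x ▸ h hx 1, fun h _ hx f ↦ h (C.smul_mem f hx)⟩

theorem restrictScalars_core_le (U : Submodule F V) : (core U).restrictScalars F ≤ U :=
  le_core_iff.1 le_rfl

theorem core_restrictScalars (C : Submodule F[X] V) : core (C.restrictScalars F) = C :=
  le_antisymm (fun x hx ↦ one_smul F[X] x ▸ hx 1) (le_core_iff.2 le_rfl)

theorem core_derived (U : Submodule F V) : core (derived U) = core U := by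
  ext x
  refine ⟨fun hx f ↦ (hx f).1, fun hx f ↦ ⟨hx f, ?_⟩⟩
  have := hx (X * f)
  rwa [mul_smul] at this

theorem restrictScalars_core_eq_self {U : Submodule F V} (hU : derived U = U) :
    (core U).restrictScalars F = U := by
  refine le_antisymm (restrictScalars_core_le U) fun x hx f ↦ ?_
  induction f using Polynomial.induction_on with
  | C a => exact algebraMap_smul F[X] a x ▸ U.smul_mem a hx
  | add f g hf hg => exact add_smul f g x ▸ U.add_mem hf hg
  | monomial n a h =>
    rw [pow_succ, ← mul_assoc, mul_comm, mul_smul]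
    exact (hU.ge h).2

/-- The dimensions of the iterated derived subspaces of `U`. -/
noncomputable def profile (U : Submodule F V) (i : ℕ) : ℕ :=
  finrank F (derived^[i] U)

theorem profile_restrictScalars (C : Submodule F[X] V) (i : ℕ) :
    profile (C.restrictScalars F) i = finrank F C := by
  rw [profile, Function.iterate_fixed (derived_restrictScalars C)]
  rfl

theorem profile_antitone [Module.Finite F V] (U : Submodule F V) : Antitone (profile U) :=
  antitone_nat_of_succ_le fun i ↦ by
    rw [profile, Function.iterate_succ_apply']
    exact Submodule.finrank_mono (derived_le _)

theorem derived_eq_self_of_profile_eq [Module.Finite F V] {U : Submodule F V}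
    (h : profile U 1 = profile U 0) : derived U = U :=
  Submodule.eq_of_le_of_finrank_eq (derived_le U) h

end DerivedSubspaces

section SubspaceTypes

theorem isFixedPt_iterate {α : Type*} [PartialOrder α] {r : α → ℕ} (hr : StrictMono r) {g : α → α}
    (hg : ∀ a, g a ≤ a) {a : α} {n : ℕ} (hn : r a ≤ n) : Function.IsFixedPt g (g^[n] a) := by
  induction n generalizing a with
  | zero => exact (hg a).eq_of_not_lt fun h ↦ by simpa [Nat.le_zero.1 hn] using hr h
  | succ n ih =>
    rcases (hg a).eq_or_lt with h | h
    · rwa [Function.iterate_fixed h]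
    · exact ih (Nat.le_of_lt_succ ((hr h).trans_le hn))

/-- The sequences with values at most `N` that are constant from the index `N` on. -/
def boundedSequences (N : ℕ) : Set (ℕ → ℕ) :=
  {f | (∀ i, f i ≤ N) ∧ ∀ i, N ≤ i → f i = f N}

theorem finite_boundedSequences (N : ℕ) : (boundedSequences N).Finite := by
  let restrict (f : ℕ → ℕ) (i : Fin (N + 1)) : ℕ := f i
  refine Set.Finite.of_finite_image (f := restrict)
    ((Set.Finite.pi' fun _ ↦ Set.finite_Iic N).subset ?_) fun f hf g hg h ↦ funext fun i ↦ ?_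
  · rintro _ ⟨f, hf, rfl⟩ i
    exact hf.1 i
  · have eqOn {i : ℕ} (hi : i ≤ N) : f i = g i := congrFun h ⟨i, Nat.lt_succ_of_le hi⟩
    rcases le_total i N with hi | hi
    · exact eqOn hi
    · rw [hf.2 i hi, hg.2 i hi, eqOn le_rfl]

variable {ι F V : Type*} [Field F] [AddCommGroup V] [Module F V] [Module F[X] V]
  [IsScalarTower F F[X] V]

theorem profile_mem_boundedSequences [Module.Finite F V] {U : Submodule F V} {N : ℕ}
    (hN : finrank F U ≤ N) : profile U ∈ boundedSequences N := by
  refine ⟨fun i ↦ (profile_antitone U i.zero_le).trans hN, fun i hi ↦ ?_⟩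
  have fixed := isFixedPt_iterate Submodule.finrank_strictMono derived_le hN
  rw [profile, ← Nat.sub_add_cancel hi, Function.iterate_add_apply, fixed.iterate, profile]

theorem socleType_mem_boundedSequences [Finite V] (p : ι → F[X]) {C : Submodule F[X] V} {N : ℕ}
    (hN : finrank F C ≤ N) (i : ι) : socleType p C i ∈ boundedSequences N := by
  have strictMono : StrictMono fun D : Submodule F[X] V ↦ finrank F D := fun D E h ↦
    Submodule.finrank_strictMono (show D.restrictScalars F < E.restrictScalars F from h)
  have eq_zero {j : ℕ} (hj : N ≤ j) : socleType p C i j = 0 := by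
    have fixed : p i • p i ^ j • C = p i ^ j • C := by
      simpa only [smul_iterate] using (isFixedPt_iterate strictMono
        (fun D ↦ Submodule.smul_le_self_of_tower (p i) D) (hN.trans hj)).eq
    have := finrank_smul_add_finrank_inf_torsionBy (p i) (p i ^ j • C)
    rwa [fixed, Nat.add_eq_left] at this
  refine ⟨fun j ↦ ?_, fun j hj ↦ by rw [eq_zero hj, eq_zero le_rfl]⟩
  exact (finrank_le_finrank (inf_le_left.trans (Submodule.smul_le_self_of_tower _ C))).trans hN

/-- The type of a subspace: its profile together with the isomorphism type of its core. -/
noncomputable def subspaceType (p : ι → F[X]) (U : Submodule F V) : (ℕ → ℕ) × (ι → ℕ → ℕ) :=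
  (profile U, socleType p (core U))

/-- The type of `derived U` as a function of the type of `U`. -/
def derivedType (α : (ℕ → ℕ) × (ι → ℕ → ℕ)) : (ℕ → ℕ) × (ι → ℕ → ℕ) :=
  (fun i ↦ α.1 (i + 1), α.2)

theorem subspaceType_derived (p : ι → F[X]) (U : Submodule F V) :
    subspaceType p (derived U) = derivedType (subspaceType p U) := by
  rw [subspaceType, core_derived]
  rfl

theorem subspaceType_restrictScalars (p : ι → F[X]) (C : Submodule F[X] V) :
    subspaceType p (C.restrictScalars F) = (fun _ ↦ finrank F C, socleType p C) := by
  rw [subspaceType, core_restrictScalars]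
  exact congrArg (·, _) (funext (profile_restrictScalars C))

theorem ext_derivedType {α β : (ℕ → ℕ) × (ι → ℕ → ℕ)} (h₀ : α.1 0 = β.1 0)
    (h : derivedType α = derivedType β) : α = β := by
  refine Prod.ext (funext fun i ↦ ?_) (congrArg Prod.snd h :)
  cases i with
  | zero => exact h₀
  | succ i => exact congrFun (congrArg Prod.fst h) i

/-- A finite set containing the types of all subspaces of dimension at most `N`. -/
def subspaceTypes (ι : Type*) (N : ℕ) : Set ((ℕ → ℕ) × (ι → ℕ → ℕ)) :=
  boundedSequences N ×ˢ {μ | ∀ i, μ i ∈ boundedSequences N}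

theorem finite_subspaceTypes (ι : Type*) [Finite ι] (N : ℕ) : (subspaceTypes ι N).Finite :=
  (finite_boundedSequences N).prod (Set.Finite.pi' fun _ ↦ finite_boundedSequences N)

theorem subspaceType_mem_subspaceTypes [Finite V] (p : ι → F[X]) {U : Submodule F V} {N : ℕ}
    (hN : finrank F U ≤ N) : subspaceType p U ∈ subspaceTypes ι N :=
  ⟨profile_mem_boundedSequences hN, socleType_mem_boundedSequences p
    ((Submodule.finrank_mono (restrictScalars_core_le U)).trans hN)⟩

/-- The subspaces of `U` of type `α`. -/
def subspacesOfType (p : ι → F[X]) (U : Submodule F V) (α : (ℕ → ℕ) × (ι → ℕ → ℕ)) :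
    Set (Submodule F V) :=
  {W | W ≤ U ∧ subspaceType p W = α}

theorem subspacesOfType_eq_singleton [Module.Finite F V] (p : ι → F[X]) (U : Submodule F V) :
    subspacesOfType p U (subspaceType p U) = {U} := by
  refine Set.eq_singleton_iff_unique_mem.2 ⟨⟨le_rfl, rfl⟩, fun W ⟨hWU, hW⟩ ↦ ?_⟩
  exact Submodule.eq_of_le_of_finrank_eq hWU (congrFun (congrArg Prod.fst hW) 0)

variable [Finite V] (p : ι → F[X]) (U : Submodule F V)

/-- The pairs `Y ≤ derived W`, `W ≤ U` of subspaces with `Y` of type `γ` and `W` of codimension `r`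
in `U`. -/
def derivedFlags (γ : (ℕ → ℕ) × (ι → ℕ → ℕ)) (r : ℕ) : Set (Submodule F V × Submodule F V) :=
  {x | (x.1 ≤ U ∧ finrank F x.1 + r = finrank F U) ∧ x.2 ∈ subspacesOfType p (derived x.1) γ}

theorem ncard_derivedFlags [Finite F] (γ : (ℕ → ℕ) × (ι → ℕ → ℕ)) (r : ℕ) :
    ((derivedFlags p U γ r).ncard : ℤ) = (subspacesOfType p (derived U) γ).ncard *
      gaussBinom (Nat.card F : ℤ) (finrank F U - (2 * γ.1 0 - γ.1 1)) r := by
  have mapsTo : Set.MapsTo Prod.snd (derivedFlags p U γ r) (subspacesOfType p (derived U) γ) :=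
    fun _ hx ↦ ⟨hx.2.1.trans (gc_expand_derived.monotone_u hx.1.1), hx.2.2⟩
  refine ncard_eq_ncard_mul mapsTo ?_
  rintro Y ⟨hYU, rfl⟩
  have fibre : {x ∈ derivedFlags p U (subspaceType p Y) r | x.2 = Y} =
      (·, Y) '' {W | W ∈ Set.Icc (expand Y) U ∧ finrank F W + r = finrank F U} := by
    ext ⟨W, Z⟩
    constructor
    · rintro ⟨⟨⟨hWU, hr⟩, hYW, -⟩, rfl⟩
      exact ⟨W, ⟨⟨gc_expand_derived.l_le hYW, hWU⟩, hr⟩, rfl⟩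
    · rintro ⟨W, ⟨⟨hYW, hWU⟩, hr⟩, rfl, rfl⟩
      exact ⟨⟨⟨hWU, hr⟩, gc_expand_derived.le_u hYW, rfl⟩, rfl⟩
  rw [fibre, Set.ncard_image_of_injective _ (Prod.mk_left_injective Y),
    ncard_Icc_finrank_add_eq (gc_expand_derived.l_le hYU)]
  congr 2
  exact eq_tsub_of_add_eq ((add_comm _ _).trans (finrank_derived_add_finrank_expand Y))

theorem ncard_derivedFlags_subspaceType {γ b : (ℕ → ℕ) × (ι → ℕ → ℕ)} {r : ℕ} {n : ℤ}
    (hb : b.1 0 + r = finrank F U)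
    (hn : ∀ W : Submodule F V, subspaceType p W = b →
      ((subspacesOfType p (derived W) γ).ncard : ℤ) = n) :
    ({x ∈ derivedFlags p U γ r | subspaceType p x.1 = b}.ncard : ℤ) =
      (subspacesOfType p U b).ncard * n := by
  have mapsTo : Set.MapsTo Prod.fst {x ∈ derivedFlags p U γ r | subspaceType p x.1 = b}
      (subspacesOfType p U b) :=
    fun _ hx ↦ ⟨hx.1.1.1, hx.2⟩
  refine ncard_eq_ncard_mul mapsTo ?_
  rintro W ⟨hWU, rfl⟩
  have fibre : {x ∈ {x ∈ derivedFlags p U γ r | subspaceType p x.1 = subspaceType p W} | x.1 = W} =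
      (W, ·) '' subspacesOfType p (derived W) γ := by
    ext ⟨W', Y⟩
    constructor
    · rintro ⟨⟨⟨-, hY⟩, -⟩, rfl⟩
      exact ⟨Y, hY, rfl⟩
    · rintro ⟨Y, hY, rfl, rfl⟩
      exact ⟨⟨⟨⟨hWU, hb⟩, hY⟩, rfl⟩, rfl⟩
  rw [fibre, Set.ncard_image_of_injective _ (Prod.mk_right_injective W), hn W rfl]

/-- The types `b` of subspaces of dimension at most `N` that agree with `α` in the dimension of the
subspace, and exceed `α` in the dimension of its derived subspace. -/
noncomputable def higherTypes [Finite ι] (α : (ℕ → ℕ) × (ι → ℕ → ℕ)) (N : ℕ) :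
    Finset ((ℕ → ℕ) × (ι → ℕ → ℕ)) := by
  classical
  exact {b ∈ (finite_subspaceTypes ι N).toFinset | b.1 0 = α.1 0 ∧ α.1 1 < b.1 1}

theorem mapsTo_derivedFlags [Finite ι] [DecidableEq ((ℕ → ℕ) × (ι → ℕ → ℕ))]
    {α : (ℕ → ℕ) × (ι → ℕ → ℕ)} {r : ℕ}
    (hr : α.1 0 + r = finrank F U) :
    Set.MapsTo (fun x ↦ subspaceType p x.1) (derivedFlags p U (derivedType α) r)
      (insert α (higherTypes α (finrank F U)) : Finset _) := by
  rintro ⟨W, Y⟩ ⟨⟨hWU, hW⟩, hYW, hY⟩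
  have hW₀ : (subspaceType p W).1 0 = α.1 0 := by
    rw [← hr] at hW
    exact Nat.add_right_cancel hW
  have hY₀ : finrank F Y = α.1 1 := congrFun (congrArg Prod.fst hY) 0
  rw [Finset.mem_coe, Finset.mem_insert]
  rcases hYW.eq_or_lt with heq | hlt
  · obtain rfl : Y = derived W := heq
    exact .inl (ext_derivedType hW₀ (by rw [← subspaceType_derived, hY]))
  · refine .inr ?_
    have h : α.1 1 < finrank F (derived W) := hY₀ ▸ Submodule.finrank_strictMono hlt
    simpa [higherTypes] using
      ⟨subspaceType_mem_subspaceTypes p (Submodule.finrank_mono hWU), hW₀, h⟩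

theorem ncard_subspacesOfType_add_sum [Finite F] [Finite ι]
    {α : (ℕ → ℕ) × (ι → ℕ → ℕ)} {r : ℕ}
    (hr : α.1 0 + r = finrank F U) {n : (ℕ → ℕ) × (ι → ℕ → ℕ) → ℤ}
    (hn : ∀ b ∈ higherTypes α (finrank F U), ∀ W : Submodule F V, subspaceType p W = b →
      ((subspacesOfType p (derived W) (derivedType α)).ncard : ℤ) = n b) :
    (subspacesOfType p U α).ncard +
        ∑ b ∈ higherTypes α (finrank F U), (subspacesOfType p U b).ncard * n b =
      (subspacesOfType p (derived U) (derivedType α)).ncard *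
        gaussBinom (Nat.card F : ℤ) (finrank F U - (2 * α.1 1 - α.1 2)) r := by
  classical
  have notMem : α ∉ higherTypes α (finrank F U) := by simp [higherTypes]
  have fibre_self : ({x ∈ derivedFlags p U (derivedType α) r | subspaceType p x.1 = α}.ncard : ℤ) =
      (subspacesOfType p U α).ncard := by
    rw [ncard_derivedFlags_subspaceType p U hr (n := 1), mul_one]
    rintro W rfl
    rw [← subspaceType_derived, subspacesOfType_eq_singleton, Set.ncard_singleton, Nat.cast_one]
  refine Eq.trans ?_ (ncard_derivedFlags p U (derivedType α) r)
  rw [ncard_eq_sum_ncard (mapsTo_derivedFlags p U hr), Finset.sum_insert notMem, Nat.cast_add,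
    fibre_self, Nat.cast_sum]
  congr 1
  refine Finset.sum_congr rfl fun b hb ↦ ?_
  have hb₀ : b.1 0 = α.1 0 := by
    simp only [higherTypes, Finset.mem_filter] at hb
    exact hb.2.1
  rw [ncard_derivedFlags_subspaceType p U (hb₀ ▸ hr) (hn b hb)]

end SubspaceTypes

section CountingSubspaces

universe u v

variable {ι : Type*} {e : ι → ℕ} {α β : (ℕ → ℕ) × (ι → ℕ → ℕ)}

/-- The value of `P` at `#F` is the number of subspaces of type `α` of any subspace of type `β`, for
all finite fields `F` and all finite `F[X]`-modules supported at primes of degrees `e`. -/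
def CountsSubspaces (e : ι → ℕ) (α β : (ℕ → ℕ) × (ι → ℕ → ℕ)) (P : ℤ[X]) : Prop :=
  ∀ (F : Type u) [Field F] [Finite F] (V : Type v) [AddCommGroup V] [Module F V] [Module F[X] V]
    [IsScalarTower F F[X] V] [Finite V] (p : ι → F[X]), IsPrimaryFamily V e p →
    ∀ U : Submodule F V, subspaceType p U = β →
      ((subspacesOfType p U α).ncard : ℤ) = P.eval (Nat.card F : ℤ)

theorem countsSubspaces_zero
    (h : ¬ (Antitone α.1 ∧ α.1 0 ≤ β.1 0 ∧ (α.1 1 = α.1 0 → ∀ i, α.1 i = α.1 0))) :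
    CountsSubspaces.{u, v} e α β 0 := by
  rintro F _ _ V _ _ _ _ _ p - U rfl
  rw [Set.eq_empty_of_forall_notMem (s := subspacesOfType p U α) ?_]
  · simp
  rintro W ⟨hWU, rfl⟩
  refine h ⟨profile_antitone W, Submodule.finrank_mono hWU, fun hW i ↦ ?_⟩
  have := restrictScalars_core_eq_self (derived_eq_self_of_profile_eq hW)
  rw [← this, subspaceType_restrictScalars]

theorem exists_countsSubspaces_invariant (hα : ∀ i, α.1 i = α.1 0) :
    ∃ P, CountsSubspaces.{u, v} e α β P := by
  obtain ⟨P, hP⟩ := exists_polynomial_ncard_submodules.{u, v} e (α.1 0) α.2 β.2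
  refine ⟨P, ?_⟩
  rintro F _ _ V _ _ _ _ _ p hp U rfl
  rw [← hP F V p hp (core U) rfl]
  congr 1
  refine (Set.ncard_congr (fun C _ ↦ C.restrictScalars F) ?_
    (fun C D _ _ h ↦ Submodule.restrictScalars_injective F F[X] V h) ?_).symm
  · rintro C ⟨hCU, hC, hCα⟩
    refine ⟨le_core_iff.1 hCU, ?_⟩
    rw [subspaceType_restrictScalars, hC, hCα]
    exact Prod.ext (funext fun i ↦ (hα i).symm) rfl
  · rintro W ⟨hWU, rfl⟩
    have hW := restrictScalars_core_eq_self (derived_eq_self_of_profile_eq (hα 1))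
    refine ⟨core W, ⟨le_core_iff.2 (hW.trans_le hWU), ?_, rfl⟩, hW⟩
    exact congrArg (fun W : Submodule F V ↦ finrank F W) hW

theorem countsSubspaces_sub_sum [Finite ι] {Q : ℤ[X]} {P R : (ℕ → ℕ) × (ι → ℕ → ℕ) → ℤ[X]}
    (h₀ : α.1 0 ≤ β.1 0) (hQ : CountsSubspaces.{u, v} e (derivedType α) (derivedType β) Q)
    (hP : ∀ b ∈ higherTypes α (β.1 0), CountsSubspaces.{u, v} e b β (P b))
    (hR : ∀ b ∈ higherTypes α (β.1 0),
      CountsSubspaces.{u, v} e (derivedType α) (derivedType b) (R b)) :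
    CountsSubspaces.{u, v} e α β
      (Q * gaussBinom X (β.1 0 - (2 * α.1 1 - α.1 2)) (β.1 0 - α.1 0) -
        ∑ b ∈ higherTypes α (β.1 0), P b * R b) := by
  rintro F _ _ V _ _ _ _ _ p hp U rfl
  have eval_gaussBinom (n k : ℕ) :
      (gaussBinom (X : ℤ[X]) n k).eval (Nat.card F : ℤ) = gaussBinom (Nat.card F : ℤ) n k := by
    rw [← coe_evalRingHom, map_gaussBinom, coe_evalRingHom, eval_X]
  rw [eval_sub, eval_mul, eval_finsetSum, eval_gaussBinom,
    ← hQ F V p hp (derived U) (subspaceType_derived p U), eq_sub_iff_add_eq]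
  refine Eq.trans ?_ (ncard_subspacesOfType_add_sum p U (Nat.add_sub_of_le h₀)
    (n := fun b ↦ (R b).eval (Nat.card F : ℤ)) ?_)
  · exact congrArg _ (Finset.sum_congr rfl fun b hb ↦ by rw [eval_mul, hP b hb F V p hp U rfl])
  · rintro b hb W rfl
    exact hR _ hb F V p hp (derived W) (subspaceType_derived p W)

/-- Lexicographic induction on `α.1 0`, increasing, and `α.1 1`, decreasing. -/
theorem exists_countsSubspaces [Finite ι] (e : ι → ℕ) (α β : (ℕ → ℕ) × (ι → ℕ → ℕ)) :
    ∃ P, CountsSubspaces.{u, v} e α β P := by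
  induction h₀ : α.1 0 using Nat.strong_induction_on generalizing α β with
  | _ n ih₀
  induction h₁ : n - α.1 1 using Nat.strong_induction_on generalizing α with
  | _ k ih₁
  subst h₀ h₁
  by_cases h : Antitone α.1 ∧ α.1 0 ≤ β.1 0 ∧ (α.1 1 = α.1 0 → ∀ i, α.1 i = α.1 0)
  · obtain ⟨anti, hβ, hconst⟩ := h
    rcases (anti zero_le_one).eq_or_lt with heq | hlt
    · exact exists_countsSubspaces_invariant (hconst heq)
    · have ih_derived (β : (ℕ → ℕ) × (ι → ℕ → ℕ)) :
          ∃ P, CountsSubspaces.{u, v} e (derivedType α) β P :=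
        ih₀ (α.1 1) hlt (derivedType α) β rfl
      have ih_higher : ∀ b, b ∈ higherTypes α (β.1 0) → ∃ P, CountsSubspaces.{u, v} e b β P := by
        intro b hb
        simp only [higherTypes, Finset.mem_filter] at hb
        exact ih₁ _ (by omega) b hb.2.1 rfl
      choose! P hP using ih_higher
      choose R hR using ih_derived
      exact ⟨_, countsSubspaces_sub_sum hβ (hR _) hP fun b _ ↦ hR _⟩
  · exact ⟨0, countsSubspaces_zero h⟩

end CountingSubspaces

section SplittingProfile

variable {F V : Type*} [Field F] [AddCommGroup V] [Module F V]

theorem iSupIndep_of_iSup_eq_top [Module.Finite F V] {ι : Type*} [Fintype ι]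
    {p : ι → Submodule F V} (h : ⨆ i, p i = ⊤)
    (hp : ∑ i, finrank F (p i) ≤ finrank F V) : iSupIndep p := by
  classical
  let f := DFinsupp.lsum ℕ fun i ↦ (p i).subtype
  have surjective : Function.Surjective f := by
    rw [← LinearMap.range_eq_top, ← h, Submodule.iSup_eq_range_dfinsupp_lsum]
  have finrank_sum : finrank F (Π₀ i, p i) = ∑ i, finrank F (p i) :=
    Module.finrank_directSum F fun i ↦ p i
  refine iSupIndep_of_dfinsupp_lsum_injective p ?_
  exact (LinearMap.injective_iff_surjective_of_finrank_eq_finrank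
    ((finrank_sum.trans_le hp).antisymm (LinearMap.finrank_le_finrank_of_surjective surjective))).2
    surjective

variable [Module F[X] V] [IsScalarTower F F[X] V]

theorem expand_iterate (W : Submodule F V) (k : ℕ) :
    expand^[k] W = ⨆ i : Fin (k + 1), (X : F[X]) ^ (i : ℕ) • W := by
  induction k with
  | zero => simp
  | succ k ih =>
    rw [Function.iterate_succ_apply', expand, ih]
    refine le_antisymm (sup_le (iSup_le fun i ↦ ?_) ?_) (iSup_le fun i ↦ ?_)
    · exact le_iSup_of_le i.castSucc le_rfl
    · rw [Submodule.pointwise_smul_def, Submodule.map_iSup]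
      refine iSup_le fun i ↦ le_iSup_of_le i.succ ?_
      rw [Fin.val_succ, pow_succ', mul_smul]
      rfl
    · cases i using Fin.cases with
      | zero => exact le_sup_of_le_left (le_iSup_of_le 0 le_rfl)
      | succ i =>
        rw [Fin.val_succ, pow_succ', mul_smul]
        exact le_sup_of_le_right (smul_mono_right _ (le_iSup_of_le i le_rfl))

theorem expand_iterate_le_derived (W : Submodule F V) (k : ℕ) :
    expand^[k] W ≤ derived (expand^[k + 1] W) := by
  rw [Function.iterate_succ_apply']
  exact gc_expand_derived.le_u_l _

variable [Module.Finite F V]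

theorem finrank_expand_iterate_succ_le (W : Submodule F V) (k : ℕ) :
    finrank F (expand^[k + 1] W) ≤ finrank F (expand^[k] W) + finrank F W := by
  induction k with
  | zero =>
    have := finrank_derived_add_finrank_expand W
    change finrank F (expand W) ≤ finrank F W + finrank F W
    omega
  | succ k ih =>
    have dims := finrank_derived_add_finrank_expand (expand^[k + 1] W)
    rw [← Function.iterate_succ_apply' expand, Nat.succ_eq_add_one] at dims
    have := Submodule.finrank_mono (expand_iterate_le_derived W k)
    omega

theorem finrank_expand_iterate_add_le (W : Submodule F V) (k j : ℕ) :
    finrank F (expand^[k + j] W) ≤ finrank F (expand^[k] W) + j * finrank F W := by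
  induction j with
  | zero => simp
  | succ j ih =>
    have := finrank_expand_iterate_succ_le W (k + j)
    rw [← add_assoc]
    linarith

variable {W U : Submodule F V} {n : ℕ}

theorem finrank_expand_iterate (hW : finrank F (expand^[n] W) = (n + 1) * finrank F W) {k : ℕ}
    (hk : k ≤ n) : finrank F (expand^[k] W) = (k + 1) * finrank F W := by
  obtain ⟨j, rfl⟩ := Nat.exists_eq_add_of_le hk
  have h₁ := finrank_expand_iterate_add_le W 0 k
  have h₂ := finrank_expand_iterate_add_le W k j
  rw [zero_add, Function.iterate_zero_apply] at h₁
  linarith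

theorem derived_iterate_expand_iterate
    (hW : finrank F (expand^[n + 1] W) = (n + 2) * finrank F W) {k j : ℕ} (hkj : k + j ≤ n) :
    derived^[j] (expand^[k + j] W) = expand^[k] W := by
  induction j with
  | zero => rfl
  | succ j ih =>
    have dims := finrank_derived_add_finrank_expand (expand^[k + j + 1] W)
    rw [← Function.iterate_succ_apply' expand, finrank_expand_iterate hW (by omega),
      finrank_expand_iterate hW (by omega)] at dims
    have step : derived (expand^[k + j + 1] W) = expand^[k + j] W := by
      refine (Submodule.eq_of_le_of_finrank_le (expand_iterate_le_derived W _) ?_).symm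
      rw [finrank_expand_iterate hW (by omega)]
      linarith
    rw [Function.iterate_succ_apply, ← add_assoc, step, ih (by omega)]

theorem profile_expand_iterate (hW : finrank F (expand^[n + 1] W) = (n + 2) * finrank F W)
    (i : ℕ) : profile (expand^[n] W) i = (n + 1 - i) * finrank F W := by
  rcases le_or_gt i n with hi | hi
  · obtain ⟨k, rfl⟩ := Nat.exists_eq_add_of_le' hi
    rw [profile, derived_iterate_expand_iterate hW le_rfl, finrank_expand_iterate hW (by omega),
      show k + i + 1 - i = k + 1 by omega]
  · have dims := finrank_derived_add_finrank_expand W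
    have expand_W : finrank F (expand W) = 2 * finrank F W :=
      finrank_expand_iterate hW (Nat.le_add_left 1 n)
    have profile_succ : profile (expand^[n] W) (n + 1) = 0 := by
      have h := derived_iterate_expand_iterate hW (k := 0) (j := n) (by omega)
      rw [zero_add] at h
      rw [profile, Function.iterate_succ_apply', h, Function.iterate_zero_apply]
      omega
    rw [Nat.sub_eq_zero_of_le hi, zero_mul]
    exact Nat.le_zero.1 (profile_succ ▸ profile_antitone _ hi)

variable {m : ℕ}

theorem expand_derived_iterate_succ {j : ℕ}
    (h : profile U (j + 2) + profile U j = 2 * profile U (j + 1)) :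
    expand (derived^[j + 1] U) = derived^[j] U := by
  refine Submodule.eq_of_le_of_finrank_eq ?_ ?_
  · rw [Function.iterate_succ_apply']
    exact gc_expand_derived.l_u_le _
  · have dims := finrank_derived_add_finrank_expand (derived^[j + 1] U)
    rw [← Function.iterate_succ_apply' derived] at dims
    exact Nat.add_left_cancel (dims.trans h.symm)

theorem expand_iterate_derived_iterate (hU : ∀ i, profile U i = (n + 1 - i) * m) {j : ℕ}
    (hj : j ≤ n) : expand^[j] (derived^[j] U) = U := by
  induction j with
  | zero => rfl
  | succ j ih =>
    have linear : profile U (j + 2) + profile U j = 2 * profile U (j + 1) := by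
      obtain ⟨k, rfl⟩ := Nat.exists_eq_add_of_le hj
      rw [hU, hU, hU, show j + 1 + k + 1 - j = k + 2 by omega,
        show j + 1 + k + 1 - (j + 1) = k + 1 by omega, show j + 1 + k + 1 - (j + 2) = k by omega]
      ring
    rw [Function.iterate_succ_apply, expand_derived_iterate_succ linear, ih (by omega)]

theorem expand_eq_top (hU : ∀ i, profile U i = (n + 1 - i) * m)
    (hV : finrank F V = (n + 2) * m) : expand U = ⊤ := by
  have dims := finrank_derived_add_finrank_expand U
  have h₀ : finrank F U = (n + 1) * m := hU 0
  have h₁ : finrank F (derived U) = n * m := hU 1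
  refine Submodule.eq_top_of_finrank_eq ?_
  rw [hV]
  linarith

theorem ncard_expand_iterate_eq_top (hV : finrank F V = (n + 1) * m) :
    {W : Submodule F V | finrank F W = m ∧ expand^[n] W = ⊤}.ncard =
      {U : Submodule F V | ∀ i, profile U i = (n - i) * m}.ncard := by
  cases n with
  | zero =>
    have top : {W : Submodule F V | finrank F W = m ∧ expand^[0] W = ⊤} = {⊤} :=
      Set.eq_singleton_iff_unique_mem.2
        ⟨⟨by rw [finrank_top, hV, zero_add, one_mul], rfl⟩, fun _ hW ↦ hW.2⟩
    have bot : {U : Submodule F V | ∀ i, profile U i = (0 - i) * m} = {⊥} := by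
      refine Set.eq_singleton_iff_unique_mem.2 ⟨fun i ↦ ?_, fun U hU ↦ ?_⟩
      · rw [Nat.zero_sub, zero_mul]
        exact Nat.le_zero.1 ((profile_antitone ⊥ i.zero_le).trans_eq (finrank_bot F V))
      · exact Submodule.finrank_eq_zero.1 ((hU 0).trans (by simp))
    rw [top, bot, Set.ncard_singleton, Set.ncard_singleton]
  | succ n =>
    have finrank_expand_iterate {W : Submodule F V} (hW : finrank F W = m)
        (hW' : expand^[n + 1] W = ⊤) : finrank F (expand^[n + 1] W) = (n + 2) * finrank F W := by
      rw [hW', finrank_top, hV, hW]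
    have derived_iterate {W : Submodule F V} (hW : finrank F W = m)
        (hW' : expand^[n + 1] W = ⊤) : derived^[n] (expand^[n] W) = W := by
      have := derived_iterate_expand_iterate (finrank_expand_iterate hW hW') (zero_add n).le
      rwa [zero_add] at this
    refine Set.ncard_congr (fun W _ ↦ expand^[n] W) ?_ ?_ ?_
    · rintro W ⟨hW, hW'⟩ i
      rw [profile_expand_iterate (finrank_expand_iterate hW hW'), hW]
    · rintro W W' ⟨hW, hWn⟩ ⟨hW', hWn'⟩ h
      rw [← derived_iterate hW hWn, h, derived_iterate hW' hWn']
    · intro U hU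
      have hUn := expand_iterate_derived_iterate hU le_rfl
      refine ⟨derived^[n] U, ⟨(hU n).trans (by simp), ?_⟩, hUn⟩
      rw [Function.iterate_succ_apply', hUn, expand_eq_top hU hV]

theorem splitCount_eq_ncard_profile {T : V →ₗ[F] V} (hT : ∀ x, T x = (X : F[X]) • x)
    (hV : finrank F V = (n + 1) * m) :
    splitCount T m (n + 1) = {U : Submodule F V | ∀ i, profile U i = (n - i) * m}.ncard := by
  rw [← ncard_expand_iterate_eq_top hV, splitCount]
  congr 1
  ext W
  have pow_apply (i : ℕ) (x : V) : (T ^ i) x = (X : F[X]) ^ i • x := by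
    induction i with
    | zero => simp
    | succ i ih => rw [pow_succ', Module.End.mul_apply, ih, hT, pow_succ', mul_smul]
  have map_pow (i : ℕ) : W.map (T ^ i) = (X : F[X]) ^ i • W :=
    congrArg (W.map ·) (LinearMap.ext (pow_apply i))
  have iSup_map : ⨆ i : Fin (n + 1), W.map (T ^ (i : ℕ)) = expand^[n] W := by
    simp only [map_pow, expand_iterate]
  rw [Set.mem_ofPred_eq, IsSplittingSubspace, iSup_map]
  refine ⟨fun h ↦ ⟨h.1, h.2.2⟩, fun h ↦
    ⟨h.1, iSupIndep_of_iSup_eq_top (iSup_map.trans h.2) ?_, h.2⟩⟩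
  refine (Finset.sum_le_card_nsmul _ _ m fun i _ ↦ ?_).trans ?_
  · exact (Submodule.finrank_map_le _ _).trans_eq h.1
  · simp [hV]

end SplittingProfile

section OperatorsOfGivenType

theorem exists_equiv_of_eq_map {α β : Type*} [DecidableEq β] {s : Finset α} {f : α → β}
    {τ : Multiset β} (h : τ = s.val.map f) : ∃ e : τ ≃ s, ∀ i, f (e i) = i.1 := by
  classical
  subst h
  let fst (x : s.val) : s := ⟨x, Multiset.coe_mem⟩
  have bijective : fst.Bijective := by
    constructor
    · rintro ⟨a, k⟩ ⟨b, l⟩ hab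
      obtain rfl : a = b := congrArg Subtype.val hab
      have := Multiset.nodup_iff_count_le_one.1 s.nodup a
      exact congrArg _ (Fin.ext (by omega))
    · rintro ⟨a, ha⟩
      exact ⟨⟨a, 0, Multiset.count_pos.2 ha⟩, rfl⟩
  refine ⟨(s.val.mapEquiv f).symm.trans (Equiv.ofBijective fst bijective), fun i ↦ ?_⟩
  exact (s.val.mapEquiv_apply f _).symm.trans (congrArg Sigma.fst (Equiv.apply_symm_apply _ i))

variable {F V : Type*} [Field F] [AddCommGroup V] [Module F[X] V]

theorem exists_monic_irreducible_inf_torsionBy_ne_bot [Finite V] {C : Submodule F[X] V}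
    (hC : C ≠ ⊥) :
    ∃ q : F[X], q.Monic ∧ Irreducible q ∧ C ⊓ Submodule.torsionBy F[X] V q ≠ ⊥ := by
  have := C.nontrivial_iff_ne_bot.2 hC
  obtain ⟨P, hP⟩ := associatedPrimes.nonempty F[X] C
  obtain ⟨prime, x, hx⟩ := isAssociatedPrime_iff.1 hP
  have mem_iff (f : F[X]) : f ∈ P ↔ f • (x : V) = 0 := by
    rw [hx, Submodule.mem_colon_singleton, Submodule.mem_bot, ← Submodule.coe_smul,
      ZeroMemClass.coe_eq_zero]
  obtain ⟨g, rfl⟩ := IsPrincipalIdealRing.principal P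
  have ne_zero : g ≠ 0 := by
    rintro rfl
    obtain ⟨f, h, hne, heq⟩ := Finite.exists_ne_map_eq_of_infinite fun f : F[X] ↦ f • (x : V)
    refine sub_ne_zero.2 hne ?_
    rw [← Submodule.mem_bot F[X], ← Submodule.span_zero_singleton, mem_iff, sub_smul]
    exact sub_eq_zero.2 heq
  have irreducible : Irreducible g := ((Ideal.span_singleton_prime ne_zero).1 prime).irreducible
  refine ⟨g * Polynomial.C g.leadingCoeff⁻¹, monic_mul_leadingCoeff_inv ne_zero,
    irreducible_mul_leadingCoeff_inv.2 irreducible,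
    (Submodule.ne_bot_iff _).2 ⟨x, ⟨x.2, ?_⟩, fun h ↦ ?_⟩⟩
  · exact (mem_iff _).1 (Ideal.mul_mem_right _ _ (Submodule.mem_span_singleton_self g))
  · exact (Ideal.ne_top_iff_one _).1 prime.ne_top ((mem_iff 1).2 (by rw [h, smul_zero]))

variable [Module F V] [IsScalarTower F F[X] V]

theorem socleType_top_add_finrank_torsionBy [Module.Finite F V] {ι : Type*} (p : ι → F[X]) (i : ι)
    (j : ℕ) :
    socleType p (⊤ : Submodule F[X] V) i j + finrank F (Submodule.torsionBy F[X] V (p i ^ j)) =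
      finrank F (Submodule.torsionBy F[X] V (p i ^ (j + 1))) := by
  have finrank_smul_top (f : F[X]) := finrank_smul_add_finrank_inf_torsionBy (F := F) (V := V) f ⊤
  have h := finrank_smul_add_finrank_inf_torsionBy (F := F) (p i) (p i ^ j • (⊤ : Submodule F[X] V))
  have h₀ := finrank_smul_top (p i ^ j)
  have h₁ := finrank_smul_top (p i ^ (j + 1))
  rw [smul_smul, ← pow_succ'] at h
  rw [top_inf_eq] at h₀ h₁
  rw [socleType]
  omega

/-- The `socleType` of a module of similarity class type `τ`. -/
def socleTypeOf (τ : Multiset (ℕ × Multiset ℕ)) (i : τ) (j : ℕ) : ℕ :=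
  i.1.1 * (i.1.2.map fun a ↦ min a (j + 1)).sum - i.1.1 * (i.1.2.map fun a ↦ min a j).sum

theorem aeval_apply_eq_smul {T : V →ₗ[F] V} (hT : ∀ x, T x = (X : F[X]) • x) (f : F[X]) (x : V) :
    aeval T f x = f • x := by
  induction f using Polynomial.induction_on with
  | C a => rw [aeval_C, Module.algebraMap_end_apply, ← algebraMap_smul F[X] a x, algebraMap_eq]
  | add f g hf hg => rw [map_add, LinearMap.add_apply, hf, hg, add_smul]
  | monomial n a h =>
    rw [pow_succ', mul_left_comm, map_mul, aeval_X, Module.End.mul_apply, h, hT, mul_smul X]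

theorem exists_isPrimaryFamily_of_hasType [Finite V] {T : V →ₗ[F] V}
    (hT : ∀ x, T x = (X : F[X]) • x) {τ : Multiset (ℕ × Multiset ℕ)} (hτ : HasType τ T) :
    ∃ p : τ → F[X], IsPrimaryFamily V (fun i : τ ↦ i.1.1) p ∧
      socleType p (⊤ : Submodule F[X] V) = socleTypeOf τ := by
  obtain ⟨s, lam, hs, -, hτs, hker, hinj⟩ := hτ
  obtain ⟨p, hp⟩ := exists_equiv_of_eq_map hτs
  have ker_aeval (f : F[X]) : LinearMap.ker (aeval T f) =
      (Submodule.torsionBy F[X] V f).restrictScalars F := by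
    ext x
    exact (congrArg (· = 0) (aeval_apply_eq_smul hT f x)).to_iff
  refine ⟨fun i ↦ p i, ⟨fun i ↦ (hs _ (p i).2).2, fun i ↦ congrArg Prod.fst (hp i), ?_, ?_⟩, ?_⟩
  · intro i j hij
    refine (hs _ (p i).2).2.coprime_iff_not_dvd.2 fun h ↦ hij (p.injective (Subtype.ext ?_))
    exact eq_of_monic_of_associated (hs _ (p i).2).1 (hs _ (p j).2).1
      ((hs _ (p i).2).2.associated_of_dvd (hs _ (p j).2).2 h)
  · intro C hC
    obtain ⟨q, monic, irreducible, hq⟩ := exists_monic_irreducible_inf_torsionBy_ne_bot hC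
    by_cases hqs : q ∈ s
    · exact ⟨p.symm ⟨q, hqs⟩, by rwa [p.apply_symm_apply]⟩
    · have torsionBy_eq_bot : Submodule.torsionBy F[X] V q = ⊥ :=
        Submodule.restrictScalars_injective F F[X] V
          ((ker_aeval q).symm.trans (hinj q monic irreducible hqs))
      exact absurd (by rw [torsionBy_eq_bot, inf_bot_eq]) hq
  · ext i j
    have finrank_torsionBy (j : ℕ) :
        finrank F (Submodule.torsionBy F[X] V ((p i : F[X]) ^ j)) =
          i.1.1 * (i.1.2.map fun a ↦ min a j).sum := by
      rw [← hp i, ← hker _ (p i).2 j, ker_aeval]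
      rfl
    have h := socleType_top_add_finrank_torsionBy (V := V) (fun i ↦ (p i : F[X])) i j
    rw [finrank_torsionBy, finrank_torsionBy] at h
    exact eq_tsub_of_add_eq h

end OperatorsOfGivenType

section CoreFreeSubspaces

variable {ι F V : Type*} [Field F] [AddCommGroup V] [Module F V] [Module F[X] V]
  [IsScalarTower F F[X] V]

theorem subspaceType_top (p : ι → F[X]) :
    subspaceType p (⊤ : Submodule F V) =
      (fun _ ↦ finrank F V, socleType p (⊤ : Submodule F[X] V)) := by
  refine (subspaceType_restrictScalars p (⊤ : Submodule F[X] V)).trans ?_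
  rw [← finrank_top F V]
  rfl

theorem core_derived_iterate (U : Submodule F V) (n : ℕ) : core (derived^[n] U) = core U := by
  induction n with
  | zero => rfl
  | succ n ih => rw [Function.iterate_succ_apply', core_derived, ih]

variable [Module.Finite F V]

theorem core_eq_bot_of_profile_eq_zero {U : Submodule F V} {n : ℕ} (h : profile U n = 0) :
    core U = ⊥ := by
  refine Submodule.restrictScalars_injective F F[X] V (eq_bot_iff.2 ?_)
  have derived_eq_bot : derived^[n] U = ⊥ := Submodule.finrank_eq_zero.1 h
  rw [← core_derived_iterate U n, ← derived_eq_bot]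
  exact restrictScalars_core_le _

theorem setOf_profile_eq_subspacesOfType (p : ι → F[X]) {α : ℕ → ℕ} {n : ℕ} (h : α n = 0) :
    {U : Submodule F V | ∀ i, profile U i = α i} = subspacesOfType p ⊤ (α, 0) := by
  ext U
  constructor
  · intro hU
    refine ⟨le_top, Prod.ext (funext hU) ?_⟩
    exact (congrArg _ (core_eq_bot_of_profile_eq_zero ((hU n).trans h))).trans (socleType_bot p)
  · rintro ⟨-, hU⟩
    exact congrFun (congrArg Prod.fst hU)

end CoreFreeSubspaces

end SplittingSubspaces

open Polynomial Module SplittingSubspaces in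
theorem splitCount_polynomial_general.{u, v} (m d : ℕ) (hd : 0 < d)
    (τ : Multiset (ℕ × Multiset ℕ)) :
    ∃ P : ℤ[X], ∀ (F : Type u) [Field F] [Finite F] (V : Type v) [AddCommGroup V] [Module F V]
      [FiniteDimensional F V], finrank F V = m * d → ∀ T : V →ₗ[F] V, HasType τ T →
        (splitCount T m d : ℤ) = P.eval (Nat.card F : ℤ) := by
  obtain ⟨n, rfl⟩ := Nat.exists_eq_add_one.2 hd
  obtain ⟨P, hP⟩ := exists_countsSubspaces.{u, v} (fun i : τ ↦ i.1.1) (fun i ↦ (n - i) * m, 0)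
    (fun _ ↦ m * (n + 1), socleTypeOf τ)
  refine ⟨P, fun F _ _ V _ _ _ hV T hτ ↦ ?_⟩
  have : Finite V := Module.finite_of_finite F
  let : Module F[X] V := inferInstanceAs (Module _ (AEval' T))
  have : IsScalarTower F F[X] V := inferInstanceAs (IsScalarTower _ _ (AEval' T))
  have hT (x : V) : T x = (X : F[X]) • x := (AEval'.X_smul_of T x).symm
  obtain ⟨p, hp, hτp⟩ := exists_isPrimaryFamily_of_hasType hT hτ
  rw [splitCount_eq_ncard_profile hT (hV.trans (mul_comm _ _)),
    setOf_profile_eq_subspacesOfType p (n := n) (by rw [Nat.sub_self, zero_mul])]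
  refine hP F V p hp ⊤ ?_
  rw [← hτp, ← hV, subspaceType_top]

/-- for fixed `m`, `d` and a fixed similarity class type `τ` of size `md`,
there is a polynomial `P` such that for every finite field `F_q` and every operator `T`
of type `τ` on an `md`-dimensional `F_q`-vector space, `σ(m,d;T) = P(q)`. -/
theorem splitCount_polynomial (m d : ℕ) (hm : 0 < m) (hd : 0 < d)
    (τ : Multiset (ℕ × Multiset ℕ))
    (hsize : (τ.map fun x => x.1 * x.2.sum).sum = m * d) :
    ∃ P : Polynomial ℚ,
      ∀ (F : Type) (_ : Field F) (_ : Fintype F)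
        (V : Type) (_ : AddCommGroup V) (_ : Module F V) (_ : FiniteDimensional F V)
        (_ : Module.finrank F V = m * d)
        (T : V →ₗ[F] V), HasType τ T →
          (splitCount T m d : ℚ) = P.eval (Fintype.card F : ℚ) := by
  obtain ⟨P, hP⟩ := splitCount_polynomial_general m d hd τ
  refine ⟨P.map (Int.castRingHom ℚ), fun F _ _ V _ _ _ hV T hT ↦ ?_⟩
  simpa [Polynomial.eval_natCast_map] using congrArg (Int.cast (R := ℚ)) (hP F V hV T hT)
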